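/- Let (Ω, 𝒜, μ) be a measure space, p ∈ [1,∞), and T a positive C₀-semigroup on L_p(μ) with generator A. If V : Ω → [−∞,0] is a T-admissible absorption rate, then −V is T-admissible, and the set [V = −∞] := {x ∈ Ω : V(x) = −∞} is a local μ-null set. -/

import Mathlib

open MeasureTheory Filter Topology ENNReal

noncomputable section

namespace Absorption

variable {E : Type*} [NormedAddCommGroup E] [NormedSpace ℝ E]

/-- A one-parameter semigroup of bounded operators (for nonnegative times). -/
def IsSemigroup (T : ℝ → E →L[ℝ] E) : Prop :=
  T 0 = ContinuousLinearMap.id ℝ E ∧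
    ∀ s t : ℝ, 0 ≤ s → 0 ≤ t → T (s + t) = (T s).comp (T t)

/-- A `C₀`-semigroup: a one-parameter semigroup which is strongly continuous on `[0, ∞)`. -/
def IsC0Semigroup (T : ℝ → E →L[ℝ] E) : Prop :=
  IsSemigroup T ∧ ∀ f : E, ContinuousOn (fun t => T t f) (Set.Ici (0 : ℝ))

/-- `(f, g)` belongs to the graph of the generator of the semigroup `T`. -/
def InGenerator (T : ℝ → E →L[ℝ] E) (f g : E) : Prop :=
  Tendsto (fun t : ℝ => t⁻¹ • (T t f - f)) (𝓝[>] (0 : ℝ)) (𝓝 g)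

variable {Ω : Type*} [MeasurableSpace Ω]

/-- A function into a measurable space is *locally measurable* (w.r.t. `μ`) if on every set of
finite measure it coincides a.e. with a measurable function. -/
def LocallyMeasurable {α : Type*} [MeasurableSpace α] (μ : Measure Ω) (V : Ω → α) : Prop :=
  ∀ B : Set Ω, MeasurableSet B → μ B < ∞ →
    ∃ g : Ω → α, Measurable g ∧ ∀ᵐ ω ∂(μ.restrict B), V ω = g ω

/-- A set is a local `μ`-null set if its intersection with every measurable set of finite
measure is null. -/
def IsLocalNullSet (μ : Measure Ω) (N : Set Ω) : Prop :=
  ∀ B : Set Ω, MeasurableSet B → μ B < ∞ → μ (N ∩ B) = 0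

/-- Positivity of a family of operators on `L_p` (for positive times). -/
def IsPositiveSG {p : ℝ≥0∞} {μ : Measure Ω} [Fact (1 ≤ p)]
    (T : ℝ → Lp ℝ p μ →L[ℝ] Lp ℝ p μ) : Prop :=
  ∀ t : ℝ, 0 ≤ t → ∀ f : Lp ℝ p μ, 0 ≤ f → 0 ≤ T t f

/-- A band projection on the Banach lattice `L_p(μ)`: an idempotent operator `P`
with `0 ≤ P f ≤ f` for all `f ≥ 0`. -/
def IsBandProjection {p : ℝ≥0∞} {μ : Measure Ω} [Fact (1 ≤ p)]
    (P : Lp ℝ p μ →L[ℝ] Lp ℝ p μ) : Prop :=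
  P.comp P = P ∧ ∀ f : Lp ℝ p μ, 0 ≤ f → 0 ≤ P f ∧ P f ≤ f

/-- `S = (e^{t(A−W)})_{t ≥ 0}`: `S` is the `C₀`-semigroup whose generator is `A - W`,
where `A` is the generator of `T` and the bounded function `W` acts by multiplication. -/
def IsPerturbedSG (μ : Measure Ω) (p : ℝ≥0∞) [Fact (1 ≤ p)]
    (T S : ℝ → Lp ℝ p μ →L[ℝ] Lp ℝ p μ) (W : Ω → ℝ) : Prop :=
  IsC0Semigroup S ∧
    ∀ f g : Lp ℝ p μ, InGenerator S f g ↔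
      ∃ g₀ : Lp ℝ p μ, InGenerator T f g₀ ∧
        ⇑g =ᵐ[μ] fun ω => g₀ ω - W ω * f ω

/-- Same as `IsPerturbedSG`, for semigroups acting on a subspace `F` of `L_p(μ)`. -/
def IsPerturbedSGSub (μ : Measure Ω) (p : ℝ≥0∞) [Fact (1 ≤ p)] (F : Submodule ℝ (Lp ℝ p μ))
    (T S : ℝ → F →L[ℝ] F) (W : Ω → ℝ) : Prop :=
  IsC0Semigroup S ∧
    ∀ f g : F, InGenerator S f g ↔
      ∃ g₀ : F, InGenerator T f g₀ ∧
        ⇑(g : Lp ℝ p μ) =ᵐ[μ] fun ω => (g₀ : Lp ℝ p μ) ω - W ω * (f : Lp ℝ p μ) ω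

/-- The truncation `V ∧ n` of `V : Ω → [0,∞]`, as a real-valued function. -/
def trunc (V : Ω → ℝ≥0∞) (n : ℕ) : Ω → ℝ := fun ω => (min (V ω) (n : ℝ≥0∞)).toReal

/-- The scalar multiple `ε V` of an absorption rate `V : Ω → [0,∞]`. -/
def smulRate (ε : ℝ) (V : Ω → ℝ≥0∞) : Ω → ℝ≥0∞ := fun ω => ENNReal.ofReal ε * V ω

/-- The absorption rate `V - V ∧ n` (with value `∞` wherever `V = ∞`). -/
def resid (V : Ω → ℝ≥0∞) (n : ℕ) : Ω → ℝ≥0∞ := fun ω => V ω - min (V ω) (n : ℝ≥0∞)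

/-- `TV` is the absorption semigroup `T_V` associated with the rate `V : Ω → [0,∞]`, i.e.
the strong limit `T_V(t) = s-lim_{n→∞} e^{t(A - V∧n)}` (for `t ≥ 0`). -/
def IsAbsorptionSG (μ : Measure Ω) (p : ℝ≥0∞) [Fact (1 ≤ p)]
    (T : ℝ → Lp ℝ p μ →L[ℝ] Lp ℝ p μ) (V : Ω → ℝ≥0∞)
    (TV : ℝ → Lp ℝ p μ →L[ℝ] Lp ℝ p μ) : Prop :=
  ∃ S : ℕ → ℝ → Lp ℝ p μ →L[ℝ] Lp ℝ p μ,
    (∀ n, IsPerturbedSG μ p T (S n) (trunc V n)) ∧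
    ∀ t : ℝ, 0 ≤ t → ∀ f, Tendsto (fun n => S n t f) atTop (𝓝 (TV t f))

/-- `V : Ω → [0,∞]` is `T`-admissible: `V` is locally measurable, the strong limits
`T_V(t) = s-lim_{n→∞} e^{t(A - V∧n)}` exist, and `T_V` is a `C₀`-semigroup. -/
def Admissible (μ : Measure Ω) (p : ℝ≥0∞) [Fact (1 ≤ p)]
    (T : ℝ → Lp ℝ p μ →L[ℝ] Lp ℝ p μ) (V : Ω → ℝ≥0∞) : Prop :=
  LocallyMeasurable μ V ∧
  ∃ TV, IsAbsorptionSG μ p T V TV ∧ IsC0Semigroup TV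

/-- The truncation `(V ∧ n) ∨ (−n)` of an extended-real-valued rate, as a real function. -/
def truncE (V : Ω → EReal) (n : ℕ) : Ω → ℝ :=
  fun ω => (max (min (V ω) (n : EReal)) (-(n : EReal))).toReal

/-- `TV` is the absorption semigroup `T_V` of an extended-real-valued rate `V`:
`T_V(t) = s-lim_{n→∞} e^{t(A - (V∧n)∨(−n))}` (for `t ≥ 0`). -/
def IsAbsorptionSGE (μ : Measure Ω) (p : ℝ≥0∞) [Fact (1 ≤ p)]
    (T : ℝ → Lp ℝ p μ →L[ℝ] Lp ℝ p μ) (V : Ω → EReal)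
    (TV : ℝ → Lp ℝ p μ →L[ℝ] Lp ℝ p μ) : Prop :=
  ∃ S : ℕ → ℝ → Lp ℝ p μ →L[ℝ] Lp ℝ p μ,
    (∀ n, IsPerturbedSG μ p T (S n) (truncE V n)) ∧
    ∀ t : ℝ, 0 ≤ t → ∀ f, Tendsto (fun n => S n t f) atTop (𝓝 (TV t f))

/-- `T`-admissibility for an extended-real-valued absorption rate `V`. -/
def AdmissibleE (μ : Measure Ω) (p : ℝ≥0∞) [Fact (1 ≤ p)]
    (T : ℝ → Lp ℝ p μ →L[ℝ] Lp ℝ p μ) (V : Ω → EReal) : Prop :=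
  LocallyMeasurable μ V ∧
  ∃ TV, IsAbsorptionSGE μ p T V TV ∧ IsC0Semigroup TV

end Absorption

open Absorption

/-!
For a positive bounded operator `B`, the semigroups generated by `A + B` and `A - B` are the sums
`∑ D_k` and `∑ (-1)^k D_k` of Dyson–Phillips series whose terms `D_k` are positive. Let `U_n` and
`S_n` be these semigroups for `B = (-V) ∧ n`. Then `0 ≤ S_n ≤ T`, and adding the two series gives
`2 T ≤ U_n + S_n`. The sequence `S_n` is decreasing, so it converges strongly because the norm of
`L_p` is order continuous; passing to the limit in `0 ≤ T - S_n ≤ U_n - T` transfers strong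
continuity at `0` from `T` and the limit of `U_n` to the limit of `S_n`.

For the second claim, let `Q` be multiplication by the indicator function of `[V = -∞]`. Then
`n Q ≤ (-V) ∧ n`, so `n` times the first Dyson–Phillips term of `Q` is dominated by `U_n(t)`, which
is strongly bounded in `n`. Hence this term vanishes, and so does its derivative `Q` at time `0`.
-/

namespace Absorption

section Semigroup

variable {E : Type*} [NormedAddCommGroup E] [NormedSpace ℝ E] {T S : ℝ → E →L[ℝ] E}

lemma IsSemigroup.zero_apply (hT : IsSemigroup T) (f : E) : T 0 f = f := by
  rw [hT.1, ContinuousLinearMap.id_apply]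

lemma IsSemigroup.add_apply (hT : IsSemigroup T) {s t : ℝ} (hs : 0 ≤ s) (ht : 0 ≤ t) (f : E) :
    T (s + t) f = T s (T t f) := by
  rw [hT.2 s t hs ht, ContinuousLinearMap.comp_apply]

lemma IsSemigroup.apply_comm (hT : IsSemigroup T) {s t : ℝ} (hs : 0 ≤ s) (ht : 0 ≤ t) (f : E) :
    T s (T t f) = T t (T s f) := by
  rw [← hT.add_apply hs ht, ← hT.add_apply ht hs, add_comm]

lemma IsC0Semigroup.continuous_apply_posPart (hT : IsC0Semigroup T) (f : E) :
    Continuous fun t => T t⁺ f :=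
  (hT.2 f).comp_continuous continuous_posPart posPart_nonneg

lemma IsC0Semigroup.tendsto_apply_zero (hT : IsC0Semigroup T) (f : E) :
    Tendsto (fun t => T t f) (𝓝[>] 0) (𝓝 f) := by
  simpa only [hT.1.zero_apply] using
    ((hT.2 f) 0 Set.self_mem_Ici).mono_left (nhdsWithin_mono 0 Set.Ioi_subset_Ici_self)

variable [CompleteSpace E]

lemma IsC0Semigroup.exists_norm_posPart_le (hT : IsC0Semigroup T) (a : ℝ) :
    ∃ M, ∀ t ≤ a, ‖T t⁺‖ ≤ M := by
  obtain ⟨M, hM⟩ := banach_steinhaus (g := fun t : Set.Icc 0 a⁺ => T t) fun f =>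
    (isCompact_Icc.exists_bound_of_continuousOn
      ((hT.2 f).mono Set.Icc_subset_Ici_self)).imp fun C hC t => hC t t.2
  exact ⟨M, fun t ht => hM ⟨t⁺, posPart_nonneg t, posPart_mono ht⟩⟩

lemma IsC0Semigroup.continuous_uncurry_posPart (hT : IsC0Semigroup T) :
    Continuous fun q : ℝ × E => T q.1⁺ q.2 := by
  refine continuous_iff_continuousAt.2 fun ⟨t, f⟩ => ?_
  obtain ⟨M, hM⟩ := hT.exists_norm_posPart_le (t + 1)
  have hon : ContinuousOn (fun q : ℝ × E => T q.1⁺ q.2) (Set.Iic (t + 1) ×ˢ Set.univ) :=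
    continuousOn_prod_of_continuousOn_lipschitzOnWith' _ M.toNNReal
      (fun s hs => ((T s⁺).lipschitz.weaken
        (NNReal.le_toNNReal_of_coe_le (hM s hs))).lipschitzOnWith)
      fun g _ => (hT.continuous_apply_posPart g).continuousOn
  exact hon.continuousAt (prod_mem_nhds (Iic_mem_nhds (lt_add_one t)) univ_mem)

lemma IsC0Semigroup.continuous_apply_comp {X : Type*} [TopologicalSpace X] (hT : IsC0Semigroup T)
    {r : X → ℝ} {u : X → E} (hr : Continuous r) (hu : Continuous u) :
    Continuous fun x => T (r x)⁺ (u x) :=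
  hT.continuous_uncurry_posPart.comp (hr.prodMk hu)

end Semigroup

section Generator

variable {E : Type*} [NormedAddCommGroup E] [NormedSpace ℝ E] {T S : ℝ → E →L[ℝ] E} {f g : E}

lemma InGenerator.map (hT : IsSemigroup T) {s : ℝ} (hs : 0 ≤ s) (h : InGenerator T f g) :
    InGenerator T (T s f) (T s g) := by
  refine (((T s).continuous.tendsto g).comp h).congr' ?_
  filter_upwards [self_mem_nhdsWithin] with t ht
  rw [Function.comp_apply, map_smul, map_sub, hT.apply_comm hs (Set.mem_Ioi.1 ht).le]

lemma InGenerator.const_smul (h : InGenerator T f g) (c : ℝ) : InGenerator T (c • f) (c • g) := by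
  refine (Tendsto.const_smul h c).congr fun t => ?_
  rw [map_smul, ← smul_sub, smul_comm]

variable [CompleteSpace E]

lemma tendsto_average_integral {φ : ℝ → ℝ → E} (hφ : Continuous (Function.uncurry φ)) :
    Tendsto (fun t : ℝ => t⁻¹ • ∫ s in (0 : ℝ)..t, φ t s) (𝓝[>] 0) (𝓝 (φ 0 0)) := by
  have hscaled : Continuous (Function.uncurry fun t r => φ t (t * r)) :=
    hφ.comp (continuous_fst.prodMk (continuous_fst.mul continuous_snd))
  have hcont : Continuous fun t : ℝ => ∫ r in (0 : ℝ)..1, φ t (t * r) :=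
    intervalIntegral.continuous_parametric_intervalIntegral_of_continuous' hscaled 0 1
  have hzero : ∫ r in (0 : ℝ)..1, φ 0 (0 * r) = φ 0 0 := by simp
  refine ((hzero ▸ hcont.tendsto 0).mono_left nhdsWithin_le_nhds).congr' ?_
  filter_upwards [self_mem_nhdsWithin] with t ht
  rw [intervalIntegral.integral_comp_mul_left _ (Set.mem_Ioi.1 ht).ne', mul_zero, mul_one]

lemma IsC0Semigroup.apply_integral_posPart (hT : IsC0Semigroup T) (f : E) {r t : ℝ} (hr : 0 ≤ r)
    (ht : 0 ≤ t) : T t (∫ s in 0..r, T s⁺ f) = ∫ s in t..r + t, T s⁺ f := by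
  have hshift := intervalIntegral.integral_comp_add_right (a := 0) (b := r) (fun s => T s⁺ f) t
  rw [zero_add] at hshift
  rw [← ContinuousLinearMap.intervalIntegral_comp_comm _
    ((hT.continuous_apply_posPart f).intervalIntegrable _ _), ← hshift]
  refine intervalIntegral.integral_congr fun s hs => ?_
  rw [Set.uIcc_of_le hr] at hs
  rw [posPart_of_nonneg hs.1, posPart_of_nonneg (add_nonneg hs.1 ht), add_comm,
    hT.1.add_apply ht hs.1]

lemma IsC0Semigroup.inGenerator_integral (hT : IsC0Semigroup T) (f : E) {r : ℝ} (hr : 0 ≤ r) :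
    InGenerator T (∫ s in 0..r, T s⁺ f) (T r f - f) := by
  have hc := hT.continuous_apply_posPart f
  have hi (a b : ℝ) : IntervalIntegrable (fun s => T s⁺ f) volume a b := hc.intervalIntegrable a b
  have hc' : Continuous fun s => T (r + s)⁺ f := hc.comp (continuous_const_add r)
  have havg := tendsto_average_integral (φ := fun _ s => T (r + s)⁺ f - T s⁺ f)
    ((hc'.sub hc).comp continuous_snd)
  rw [add_zero, posPart_of_nonneg hr, posPart_zero, hT.1.zero_apply] at havg
  refine havg.congr' ?_
  filter_upwards [self_mem_nhdsWithin] with t ht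
  rw [hT.apply_integral_posPart f hr (Set.mem_Ioi.1 ht).le,
    intervalIntegral.integral_sub (hc'.intervalIntegrable _ _) (hi _ _),
    intervalIntegral.integral_comp_add_left (fun s => T s⁺ f), add_zero,
    intervalIntegral.integral_interval_sub_interval_comm' (hi _ _) (hi _ _) (hi _ _)]

lemma IsC0Semigroup.dense_domain (hT : IsC0Semigroup T) :
    Dense {f | ∃ g, InGenerator T f g} := by
  intro f
  have havg := tendsto_average_integral (φ := fun _ s => T s⁺ f)
    ((hT.continuous_apply_posPart f).comp continuous_snd)
  rw [posPart_zero, hT.1.zero_apply] at havg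
  refine mem_closure_of_tendsto havg ?_
  filter_upwards [self_mem_nhdsWithin] with r hr
  exact ⟨_, (hT.inGenerator_integral f (Set.mem_Ioi.1 hr).le).const_smul r⁻¹⟩

lemma IsC0Semigroup.hasDerivWithinAt_apply_sub {g' : E} (hS : IsC0Semigroup S)
    (hT : IsSemigroup T) {s t : ℝ} (hs : 0 ≤ s) (hst : s < t) (hg : InGenerator T (T s f) g)
    (hg' : InGenerator S (T s f) g') :
    HasDerivWithinAt (fun r => S (t - r)⁺ (T r⁺ f)) (S (t - s) (g - g')) (Set.Ici s) s := by
  rw [hasDerivWithinAt_iff_tendsto_slope, Set.Ici_sdiff_left]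
  have hsub : Tendsto (fun r => r - s) (𝓝[>] s) (𝓝[>] 0) :=
    tendsto_nhdsWithin_iff.2
      ⟨tendsto_sub_nhds_zero_iff.2 tendsto_id |>.mono_left nhdsWithin_le_nhds,
        eventually_mem_nhdsWithin.mono fun _ hr => Set.mem_Ioi.2 (sub_pos.2 hr)⟩
  have hquot := (hg.sub hg').comp hsub
  have htime : Tendsto (fun r => t - r) (𝓝[>] s) (𝓝 (t - s)) :=
    (tendsto_const_nhds.sub tendsto_id).mono_left nhdsWithin_le_nhds
  have hlim := (hS.continuous_uncurry_posPart.tendsto (t - s, g - g')).comp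
    (htime.prodMk_nhds hquot)
  simp only [posPart_of_nonneg (sub_pos.2 hst).le] at hlim
  refine hlim.congr' ?_
  filter_upwards [Ioo_mem_nhdsGT hst] with r ⟨hsr, hrt⟩
  have hT_split : T r f = T (r - s) (T s f) := by
    rw [← hT.add_apply (sub_pos.2 hsr).le hs, sub_add_cancel]
  have hS_split : S (t - s) (T s f) = S (t - r) (S (r - s) (T s f)) := by
    rw [← hS.1.add_apply (sub_pos.2 hrt).le (sub_pos.2 hsr).le, sub_add_sub_cancel]
  rw [slope_def_module, posPart_of_nonneg (sub_pos.2 hst).le, posPart_of_nonneg hs,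
    posPart_of_nonneg (hs.trans hsr.le), hT_split, hS_split]
  simp only [Function.comp_apply, posPart_of_nonneg (sub_pos.2 hrt).le, ← smul_sub, map_smul,
    map_sub, sub_sub_sub_cancel_right]

lemma IsC0Semigroup.eq_of_inGenerator_imp (hT : IsC0Semigroup T) (hS : IsC0Semigroup S)
    (h : ∀ f g, InGenerator T f g → InGenerator S f g) {t : ℝ} (ht : 0 ≤ t) : T t = S t := by
  have hdom : Set.EqOn (T t) (S t) {f | ∃ g, InGenerator T f g} := by
    rintro f ⟨g, hfg⟩
    have hderiv : ∀ s ∈ Set.Ico 0 t,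
        HasDerivWithinAt (fun r => S (t - r)⁺ (T r⁺ f)) 0 (Set.Ici s) s := by
      rintro s ⟨hs, hst⟩
      have hTs := hfg.map hT.1 hs
      simpa only [sub_self, map_zero] using
        hS.hasDerivWithinAt_apply_sub hT.1 hs hst hTs (h _ _ hTs)
    have hconst := constant_of_has_deriv_right_zero
      (hS.continuous_apply_comp (continuous_const.sub continuous_id)
        (hT.continuous_apply_posPart f)).continuousOn hderiv t (Set.right_mem_Icc.2 ht)
    simpa [posPart_of_nonneg ht, hT.1.zero_apply, hS.1.zero_apply] using hconst
  exact ContinuousLinearMap.ext fun f =>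
    congrFun ((T t).continuous.ext_on hT.dense_domain (S t).continuous hdom) f

end Generator

section Duhamel

variable {E : Type*} [NormedAddCommGroup E] [NormedSpace ℝ E] {T : ℝ → E →L[ℝ] E}
  {v w : ℝ → E} {a t : ℝ}

/-- The Duhamel integral `∫₀ᵗ T(t - s) v(s) ds`, i.e. the mild solution with initial value `0` of
the inhomogeneous Cauchy problem with right-hand side `v`. The time argument of `T` is replaced by
its positive part to make the integrand continuous in `s` on all of `ℝ`. -/
def duhamel (T : ℝ → E →L[ℝ] E) (v : ℝ → E) (t : ℝ) : E :=
  ∫ s in 0..t, T (t - s)⁺ (v s)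

lemma duhamel_zero (T : ℝ → E →L[ℝ] E) (v : ℝ → E) : duhamel T v 0 = 0 :=
  intervalIntegral.integral_same

lemma duhamel_const_smul (T : ℝ → E →L[ℝ] E) (c : ℝ) (v : ℝ → E) (t : ℝ) :
    duhamel T (fun s => c • v s) t = c • duhamel T v t := by
  simp only [duhamel, map_smul, intervalIntegral.integral_smul]

lemma norm_duhamel_le {M C : ℝ} (hM : ∀ s ≤ a, ‖T s⁺‖ ≤ M) (k : ℕ)
    (hv : ∀ s ∈ Set.Icc 0 a, ‖v s‖ ≤ C * (s ^ k / k.factorial)) (ht : t ∈ Set.Icc 0 a) :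
    ‖duhamel T v t‖ ≤ M * C * (t ^ (k + 1) / (k + 1).factorial) := by
  have hM0 : 0 ≤ M := (norm_nonneg _).trans (hM a le_rfl)
  calc ‖duhamel T v t‖ ≤ ∫ s in 0..t, M * C / k.factorial * s ^ k := by
        refine intervalIntegral.norm_integral_le_of_norm_le ht.1 (ae_of_all _ fun s hs => ?_)
          (Continuous.intervalIntegrable (by fun_prop) _ _)
        calc ‖T (t - s)⁺ (v s)‖ ≤ M * ‖v s‖ :=
              (T (t - s)⁺).le_of_opNorm_le (hM _ (by linarith [hs.1, ht.2])) _
          _ ≤ M * (C * (s ^ k / k.factorial)) := by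
              gcongr
              exact hv s ⟨hs.1.le, hs.2.trans ht.2⟩
          _ = M * C / k.factorial * s ^ k := by ring
    _ = M * C * (t ^ (k + 1) / (k + 1).factorial) := by
        rw [intervalIntegral.integral_const_mul, integral_pow, Nat.factorial_succ]
        push_cast
        field_simp
        ring

variable [CompleteSpace E]

lemma IsC0Semigroup.continuous_duhamel_integrand (hT : IsC0Semigroup T) (hv : Continuous v) :
    Continuous (Function.uncurry fun t s : ℝ => T (t - s)⁺ (v s)) :=
  hT.continuous_apply_comp (continuous_fst.sub continuous_snd) (hv.comp continuous_snd)

lemma IsC0Semigroup.intervalIntegrable_duhamel (hT : IsC0Semigroup T) (hv : Continuous v)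
    (t a b : ℝ) : IntervalIntegrable (fun s => T (t - s)⁺ (v s)) volume a b :=
  ((hT.continuous_duhamel_integrand hv).comp (Continuous.prodMk_right t)).intervalIntegrable a b

lemma IsC0Semigroup.continuous_duhamel (hT : IsC0Semigroup T) (hv : Continuous v) :
    Continuous (duhamel T v) :=
  intervalIntegral.continuous_parametric_intervalIntegral_of_continuous
    (hT.continuous_duhamel_integrand hv) continuous_id

lemma IsC0Semigroup.tendsto_inv_smul_duhamel (hT : IsC0Semigroup T) (hv : Continuous v) :
    Tendsto (fun t => t⁻¹ • duhamel T v t) (𝓝[>] 0) (𝓝 (v 0)) := by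
  simpa only [duhamel, sub_zero, posPart_zero, hT.1.zero_apply] using
    tendsto_average_integral (hT.continuous_duhamel_integrand hv)

lemma IsC0Semigroup.duhamel_add (hT : IsC0Semigroup T) (hv : Continuous v) (hw : Continuous w)
    (t : ℝ) : duhamel T (fun s => v s + w s) t = duhamel T v t + duhamel T w t := by
  simp only [duhamel, map_add]
  exact intervalIntegral.integral_add (hT.intervalIntegrable_duhamel hv _ _ _)
    (hT.intervalIntegrable_duhamel hw _ _ _)

lemma IsC0Semigroup.duhamel_sub (hT : IsC0Semigroup T) (hv : Continuous v) (hw : Continuous w)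
    (t : ℝ) : duhamel T (fun s => v s - w s) t = duhamel T v t - duhamel T w t := by
  simp only [duhamel, map_sub]
  exact intervalIntegral.integral_sub (hT.intervalIntegrable_duhamel hv _ _ _)
    (hT.intervalIntegrable_duhamel hw _ _ _)

lemma IsC0Semigroup.duhamel_time_add (hT : IsC0Semigroup T) (hv : Continuous v) {s : ℝ}
    (ht : 0 ≤ t) (hs : 0 ≤ s) :
    duhamel T v (t + s) = T t (duhamel T v s) + duhamel T (fun r => v (r + s)) t := by
  have hi := hT.intervalIntegrable_duhamel hv (t + s)
  rw [duhamel, ← intervalIntegral.integral_add_adjacent_intervals (hi 0 s) (hi s (t + s))]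
  congr 1
  · rw [duhamel, ← ContinuousLinearMap.intervalIntegral_comp_comm _
      (hT.intervalIntegrable_duhamel hv _ _ _)]
    refine intervalIntegral.integral_congr fun r hr => ?_
    rw [Set.uIcc_of_le hs] at hr
    have hrs : 0 ≤ s - r := sub_nonneg.2 hr.2
    rw [add_sub_assoc, posPart_of_nonneg (add_nonneg ht hrs), posPart_of_nonneg hrs,
      hT.1.add_apply ht hrs]
  · have hshift := intervalIntegral.integral_comp_add_right (a := 0) (b := t)
      (fun r => T (t + s - r)⁺ (v r)) s
    rw [zero_add] at hshift
    simp only [duhamel, ← hshift, add_sub_add_right_eq_sub]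

lemma IsC0Semigroup.hasSum_duhamel (hT : IsC0Semigroup T) {v : ℕ → ℝ → E} {b : ℕ → ℝ}
    (hv : ∀ k, Continuous (v k)) (hb : Summable b) (hvb : ∀ k, ∀ s ∈ Set.Icc 0 t, ‖v k s‖ ≤ b k)
    (hsum : ∀ s ∈ Set.Icc 0 t, HasSum (fun k => v k s) (w s)) (ht : 0 ≤ t) :
    HasSum (fun k => duhamel T (v k) t) (duhamel T w t) := by
  obtain ⟨M, hM⟩ := hT.exists_norm_posPart_le t
  refine intervalIntegral.hasSum_integral_of_dominated_convergence (fun k _ => M * b k)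
    (fun k => (hT.intervalIntegrable_duhamel (hv k) t 0 t).aestronglyMeasurable_restrict_uIoc)
    (fun k => ae_of_all _ fun s hs => ?_) (ae_of_all _ fun _ _ => hb.mul_left M)
    (by simp only [intervalIntegrable_const]) (ae_of_all _ fun s hs => ?_)
  all_goals
    rw [Set.uIoc_of_le ht] at hs
    have hs' : s ∈ Set.Icc 0 t := Set.Ioc_subset_Icc_self hs
  · exact (T (t - s)⁺).le_of_opNorm_le_of_le (hM _ (by linarith [hs.1])) (hvb k s hs')
  · exact (T (t - s)⁺).hasSum (hsum s hs')

lemma IsC0Semigroup.eq_zero_of_eq_duhamel (hT : IsC0Semigroup T) (B : E →L[ℝ] E) {u : ℝ → E}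
    (hu : Continuous u) (h : ∀ t, 0 ≤ t → u t = duhamel T (fun s => B (u s)) t) (ht : 0 ≤ t) :
    u t = 0 := by
  obtain ⟨M, hM⟩ := hT.exists_norm_posPart_le t
  obtain ⟨C, hC⟩ := (isCompact_Icc (a := 0) (b := t)).exists_bound_of_continuousOn hu.continuousOn
  have hbound : ∀ k : ℕ, ∀ s ∈ Set.Icc 0 t,
      ‖u s‖ ≤ (M * ‖B‖) ^ k * C * (s ^ k / k.factorial) := by
    intro k
    induction k with
    | zero => simpa using hC
    | succ k ih =>
      intro s hs
      rw [h s hs.1]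
      refine (norm_duhamel_le hM k (C := ‖B‖ * ((M * ‖B‖) ^ k * C)) (fun r hr => ?_) hs).trans_eq
        (by ring)
      exact (B.le_opNorm_of_le (ih r hr)).trans_eq (by ring)
  have hlim : Tendsto (fun k : ℕ => (M * ‖B‖) ^ k * C * (t ^ k / k.factorial)) atTop (𝓝 0) := by
    have hpow := (FloorSemiring.tendsto_pow_div_factorial_atTop (M * ‖B‖ * t)).const_mul C
    rw [mul_zero] at hpow
    exact hpow.congr fun k => by ring
  exact norm_le_zero_iff.1 (ge_of_tendsto' hlim fun k => hbound k t (Set.right_mem_Icc.2 ht))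

end Duhamel

section DysonPhillips

variable {E : Type*} [NormedAddCommGroup E] [NormedSpace ℝ E] {T S : ℝ → E →L[ℝ] E}
  {B C : E →L[ℝ] E} {t : ℝ}

/-- The `k`-th term of the Dyson–Phillips series of the perturbation of `T` by the bounded operator
`B`, as a function of the initial value and of time. -/
def dysonPhillips (T : ℝ → E →L[ℝ] E) (B : E →L[ℝ] E) : ℕ → E → ℝ → E
  | 0, f, t => T t⁺ f
  | k + 1, f, t => duhamel T (fun s => B (dysonPhillips T B k f s)) t

lemma dysonPhillips_zero (ht : 0 ≤ t) (f : E) : dysonPhillips T B 0 f t = T t f := by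
  rw [dysonPhillips, posPart_of_nonneg ht]

lemma dysonPhillips_const_smul (T : ℝ → E →L[ℝ] E) (B : E →L[ℝ] E) (k : ℕ) (c : ℝ) (f : E)
    (t : ℝ) : dysonPhillips T B k (c • f) t = c • dysonPhillips T B k f t := by
  induction k generalizing t with
  | zero => simp only [dysonPhillips, map_smul]
  | succ k ih => simp only [dysonPhillips, ih, map_smul, duhamel_const_smul]

lemma dysonPhillips_smul_operator (T : ℝ → E →L[ℝ] E) (c : ℝ) (B : E →L[ℝ] E) (k : ℕ) (f : E)
    (t : ℝ) : dysonPhillips T (c • B) k f t = c ^ k • dysonPhillips T B k f t := by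
  induction k generalizing t with
  | zero => simp only [dysonPhillips, pow_zero, one_smul]
  | succ k ih =>
    simp only [dysonPhillips, ih, smul_apply, map_smul, smul_smul, duhamel_const_smul, pow_succ]

variable [CompleteSpace E]

lemma IsC0Semigroup.continuous_dysonPhillips (hT : IsC0Semigroup T) (B : E →L[ℝ] E) (k : ℕ)
    (f : E) : Continuous (dysonPhillips T B k f) := by
  induction k with
  | zero => exact hT.continuous_apply_posPart f
  | succ k ih => exact hT.continuous_duhamel (B.continuous.comp ih)

lemma IsC0Semigroup.dysonPhillips_add (hT : IsC0Semigroup T) (B : E →L[ℝ] E) (k : ℕ) (f g : E)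
    (t : ℝ) :
    dysonPhillips T B k (f + g) t = dysonPhillips T B k f t + dysonPhillips T B k g t := by
  induction k generalizing t with
  | zero => simp only [dysonPhillips, map_add]
  | succ k ih =>
    simp only [dysonPhillips, ih, map_add]
    exact hT.duhamel_add (B.continuous.comp (hT.continuous_dysonPhillips B k f))
      (B.continuous.comp (hT.continuous_dysonPhillips B k g)) t

lemma IsC0Semigroup.exists_summable_dysonPhillips_bound (hT : IsC0Semigroup T) (B : E →L[ℝ] E)
    (a : ℝ) : ∃ b : ℕ → ℝ, Summable b ∧
      ∀ k f, ∀ t ∈ Set.Icc 0 a, ‖dysonPhillips T B k f t‖ ≤ b k * ‖f‖ := by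
  obtain ⟨M, hM⟩ := hT.exists_norm_posPart_le a
  have hM0 : 0 ≤ M := (norm_nonneg _).trans (hM a le_rfl)
  have hbound : ∀ k f, ∀ t ∈ Set.Icc 0 a,
      ‖dysonPhillips T B k f t‖ ≤ M * (M * ‖B‖) ^ k * ‖f‖ * (t ^ k / k.factorial) := by
    intro k f
    induction k with
    | zero => intro t ht; simpa [dysonPhillips] using (T t⁺).le_of_opNorm_le (hM t ht.2) f
    | succ k ih =>
      intro t ht
      refine (norm_duhamel_le hM k (C := ‖B‖ * (M * (M * ‖B‖) ^ k * ‖f‖))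
        (fun s hs => ?_) ht).trans_eq (by ring)
      exact (B.le_opNorm_of_le (ih s hs)).trans_eq (by ring)
  refine ⟨fun k => M * ((M * ‖B‖ * a) ^ k / k.factorial),
    (Real.summable_pow_div_factorial _).mul_left M, fun k f t ht => (hbound k f t ht).trans ?_⟩
  calc M * (M * ‖B‖) ^ k * ‖f‖ * (t ^ k / k.factorial)
      ≤ M * (M * ‖B‖) ^ k * ‖f‖ * (a ^ k / k.factorial) := by
        have := ht.1
        gcongr
        exact ht.2
    _ = M * ((M * ‖B‖ * a) ^ k / k.factorial) * ‖f‖ := by ring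

lemma IsC0Semigroup.summable_dysonPhillips (hT : IsC0Semigroup T) (B : E →L[ℝ] E) (f : E)
    (ht : 0 ≤ t) : Summable fun k => dysonPhillips T B k f t := by
  obtain ⟨b, hb, hbound⟩ := hT.exists_summable_dysonPhillips_bound B t
  exact .of_norm_bounded (hb.mul_right ‖f‖) fun k => hbound k f t (Set.right_mem_Icc.2 ht)

/-- The semigroup generated by the sum of the generator of `T` and the bounded operator `B`,
constructed as the sum of the Dyson–Phillips series; it is constant on `(-∞, 0]`. -/
def perturbedSemigroup (hT : IsC0Semigroup T) (B : E →L[ℝ] E) (t : ℝ) : E →L[ℝ] E :=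
  LinearMap.mkContinuousOfExistsBound
    { toFun := fun f => ∑' k, dysonPhillips T B k f t⁺
      map_add' := fun f g => by
        simp only [hT.dysonPhillips_add]
        exact (hT.summable_dysonPhillips B f (posPart_nonneg t)).tsum_add
          (hT.summable_dysonPhillips B g (posPart_nonneg t))
      map_smul' := fun c f => by
        simp only [dysonPhillips_const_smul]
        exact (hT.summable_dysonPhillips B f (posPart_nonneg t)).tsum_const_smul c }
    (by
      obtain ⟨b, hb, hbound⟩ := hT.exists_summable_dysonPhillips_bound B t⁺
      exact ⟨∑' k, b k, fun f => tsum_of_norm_bounded (hb.hasSum.mul_right ‖f‖)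
        fun k => hbound k f t⁺ (Set.right_mem_Icc.2 (posPart_nonneg t))⟩)

lemma perturbedSemigroup_apply (hT : IsC0Semigroup T) (B : E →L[ℝ] E) (t : ℝ) (f : E) :
    perturbedSemigroup hT B t f = ∑' k, dysonPhillips T B k f t⁺ := rfl

lemma hasSum_perturbedSemigroup (hT : IsC0Semigroup T) (B : E →L[ℝ] E) (f : E) (ht : 0 ≤ t) :
    HasSum (fun k => dysonPhillips T B k f t) (perturbedSemigroup hT B t f) := by
  rw [perturbedSemigroup_apply, posPart_of_nonneg ht]
  exact (hT.summable_dysonPhillips B f ht).hasSum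

lemma continuous_perturbedSemigroup_apply (hT : IsC0Semigroup T) (B : E →L[ℝ] E) (f : E) :
    Continuous fun t => perturbedSemigroup hT B t f := by
  refine continuous_iff_continuousAt.2 fun t => ?_
  obtain ⟨b, hb, hbound⟩ := hT.exists_summable_dysonPhillips_bound B (t⁺ + 1)
  simp only [perturbedSemigroup_apply]
  have hon : ContinuousOn (fun s => ∑' k, dysonPhillips T B k f s⁺) (Set.Iio (t⁺ + 1)) :=
    continuousOn_tsum
      (fun k => ((hT.continuous_dysonPhillips B k f).comp continuous_posPart).continuousOn)
      (hb.mul_right ‖f‖) fun k s hs => hbound k f s⁺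
        ⟨posPart_nonneg s, sup_le (Set.mem_Iio.1 hs).le (by positivity)⟩
  exact hon.continuousAt (Iio_mem_nhds (by linarith [le_posPart t]))

lemma perturbedSemigroup_apply_eq_add_duhamel (hT : IsC0Semigroup T) (B : E →L[ℝ] E) (f : E)
    (ht : 0 ≤ t) : perturbedSemigroup hT B t f =
      T t f + duhamel T (fun s => B (perturbedSemigroup hT B s f)) t := by
  obtain ⟨b, hb, hbound⟩ := hT.exists_summable_dysonPhillips_bound B t
  have htail : HasSum (fun k => dysonPhillips T B (k + 1) f t)
      (duhamel T (fun s => B (perturbedSemigroup hT B s f)) t) :=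
    hT.hasSum_duhamel (fun k => B.continuous.comp (hT.continuous_dysonPhillips B k f))
      ((hb.mul_right ‖f‖).mul_left ‖B‖)
      (fun k s hs => B.le_opNorm_of_le (hbound k f s hs))
      (fun s hs => B.hasSum (hasSum_perturbedSemigroup hT B f hs.1)) ht
  rw [← dysonPhillips_zero (T := T) (B := B) ht]
  exact (hasSum_perturbedSemigroup hT B f ht).unique
    (htail.zero_add (f := fun k => dysonPhillips T B k f t))

lemma perturbedSemigroup_add_apply (hT : IsC0Semigroup T) (B : E →L[ℝ] E) {s : ℝ} (ht : 0 ≤ t)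
    (hs : 0 ≤ s) (f : E) : perturbedSemigroup hT B (t + s) f =
      perturbedSemigroup hT B t (perturbedSemigroup hT B s f) := by
  set P := perturbedSemigroup hT B
  have hP := continuous_perturbedSemigroup_apply hT B
  have hP_eq (f : E) {t : ℝ} (ht : 0 ≤ t) : P t f = T t f + duhamel T (fun s => B (P s f)) t :=
    perturbedSemigroup_apply_eq_add_duhamel hT B f ht
  have hBP (f : E) : Continuous fun r => B (P r f) := B.continuous.comp (hP f)
  have hshift : Continuous fun r => P (r + s) f := (hP f).comp (continuous_add_const s)
  have hBshift : Continuous fun r => B (P (r + s) f) := B.continuous.comp hshift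
  have hTP (t : ℝ) : T t (P s f) = T t (T s f) + T t (duhamel T (fun s => B (P s f)) s) :=
    (congrArg (T t) (hP_eq f hs)).trans (map_add _ _ _)
  refine sub_eq_zero.1 (hT.eq_zero_of_eq_duhamel B (u := fun t => P (t + s) f - P t (P s f))
    (hshift.sub (hP _)) (fun t ht => ?_) ht)
  simp only [map_sub]
  rw [hT.duhamel_sub hBshift (hBP _), hP_eq f (add_nonneg ht hs),
    hP_eq (P s f) ht, hT.duhamel_time_add (hBP f) ht hs, hT.1.add_apply ht hs, hTP]
  abel

lemma isC0Semigroup_perturbedSemigroup (hT : IsC0Semigroup T) (B : E →L[ℝ] E) :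
    IsC0Semigroup (perturbedSemigroup hT B) := by
  refine ⟨⟨?_, fun s t hs ht => ?_⟩,
    fun f => (continuous_perturbedSemigroup_apply hT B f).continuousOn⟩
  · ext f
    rw [perturbedSemigroup_apply_eq_add_duhamel hT B f le_rfl, duhamel_zero, add_zero, hT.1.1]
  · ext f
    exact perturbedSemigroup_add_apply hT B hs ht f

end DysonPhillips

section BoundedPerturbation

variable {E : Type*} [NormedAddCommGroup E] [NormedSpace ℝ E] {T S R : ℝ → E →L[ℝ] E}
  {B C : E →L[ℝ] E} {t : ℝ}

/-- `S` is the `C₀`-semigroup generated by `A + B`, where `A` is the generator of `T`. -/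
def IsBoundedPerturbation (T : ℝ → E →L[ℝ] E) (B : E →L[ℝ] E) (S : ℝ → E →L[ℝ] E) : Prop :=
  IsC0Semigroup S ∧ ∀ f g, InGenerator S f g ↔ InGenerator T f (g - B f)

lemma IsBoundedPerturbation.symm (h : IsBoundedPerturbation T B S) (hT : IsC0Semigroup T) :
    IsBoundedPerturbation S (-B) T :=
  ⟨hT, fun f g => by rw [h.2, neg_apply, sub_neg_eq_add, add_sub_cancel_right]⟩

lemma IsBoundedPerturbation.trans (hS : IsBoundedPerturbation T B S)
    (hR : IsBoundedPerturbation S C R) : IsBoundedPerturbation T (B + C) R :=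
  ⟨hR.1, fun f g => by rw [hR.2, hS.2, add_apply, sub_sub, add_comm]⟩

lemma isBoundedPerturbation_of_tendsto (hS : IsC0Semigroup S)
    (h : ∀ f, Tendsto (fun t => t⁻¹ • (S t f - T t f)) (𝓝[>] 0) (𝓝 (B f))) :
    IsBoundedPerturbation T B S := by
  refine ⟨hS, fun f g => ⟨fun hSf => (hSf.sub (h f)).congr fun t => ?_, fun hTf => ?_⟩⟩
  · module
  · rw [← sub_add_cancel g (B f)]
    exact (hTf.add (h f)).congr fun t => by rw [← smul_add, add_comm, sub_add_sub_cancel]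

lemma IsC0Semigroup.isBoundedPerturbation_exp_smul (hT : IsC0Semigroup T) (c : ℝ) :
    IsBoundedPerturbation T (c • ContinuousLinearMap.id ℝ E)
      (fun t => Real.exp (c * t) • T t) := by
  refine isBoundedPerturbation_of_tendsto ⟨⟨by simp [hT.1.1], fun s t hs ht => ?_⟩, fun f => ?_⟩
    fun f => ?_
  · simp only [hT.1.2 s t hs ht, mul_add, Real.exp_add, ContinuousLinearMap.smul_comp,
      ContinuousLinearMap.comp_smul, smul_smul, mul_comm]
  · exact ContinuousOn.smul (by fun_prop) (hT.2 f)
  · have hexp : HasDerivAt (fun t => Real.exp (c * t)) c 0 := by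
      simpa using ((hasDerivAt_id (0 : ℝ)).const_mul c).exp
    refine (hexp.tendsto_slope_zero_right.smul (hT.tendsto_apply_zero f)).congr fun t => ?_
    simp only [zero_add, mul_zero, Real.exp_zero, smul_apply, smul_assoc, sub_smul, one_smul]

variable [CompleteSpace E]

lemma isBoundedPerturbation_perturbedSemigroup (hT : IsC0Semigroup T) (B : E →L[ℝ] E) :
    IsBoundedPerturbation T B (perturbedSemigroup hT B) := by
  have hC0 := isC0Semigroup_perturbedSemigroup hT B
  refine isBoundedPerturbation_of_tendsto hC0 fun f => ?_
  have hlim := hT.tendsto_inv_smul_duhamel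
    (B.continuous.comp (continuous_perturbedSemigroup_apply hT B f))
  simp only [Function.comp_apply, hC0.1.zero_apply] at hlim
  refine hlim.congr' ?_
  filter_upwards [self_mem_nhdsWithin] with t ht
  rw [perturbedSemigroup_apply_eq_add_duhamel hT B f (Set.mem_Ioi.1 ht).le, add_sub_cancel_left]
  rfl

lemma IsBoundedPerturbation.hasSum_dysonPhillips (h : IsBoundedPerturbation T B S)
    (hT : IsC0Semigroup T) (f : E) (ht : 0 ≤ t) :
    HasSum (fun k => dysonPhillips T B k f t) (S t f) := by
  have hP := isBoundedPerturbation_perturbedSemigroup hT B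
  rw [← hP.1.eq_of_inGenerator_imp h.1 (fun f g => ((hP.2 f g).trans (h.2 f g).symm).1) ht]
  exact hasSum_perturbedSemigroup hT B f ht

end BoundedPerturbation

section Positivity

variable {E : Type*} [NormedAddCommGroup E] [NormedSpace ℝ E] [PartialOrder E]

/-- Positivity of a bounded operator on an ordered normed space, in the sense that it maps the
positive cone into itself. The order `B ≤ C` between operators is expressed as positivity of
`C - B`. -/
def IsPositiveOperator (B : E →L[ℝ] E) : Prop :=
  ∀ f, 0 ≤ f → 0 ≤ B f

lemma isPositiveOperator_of_tendsto [OrderClosedTopology E] {A : ℕ → E →L[ℝ] E} {C : E →L[ℝ] E}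
    (hA : ∀ n, IsPositiveOperator (A n))
    (hC : ∀ f, Tendsto (fun n => A n f) atTop (𝓝 (C f))) : IsPositiveOperator C :=
  fun f hf => ge_of_tendsto' (hC f) fun n => hA n f hf

variable [IsOrderedAddMonoid E] {T S U : ℝ → E →L[ℝ] E} {B C : E →L[ℝ] E} {v w : ℝ → E} {f : E}
  {t : ℝ}

lemma IsPositiveOperator.apply_le_apply (hBC : IsPositiveOperator (C - B)) (hf : 0 ≤ f) :
    B f ≤ C f :=
  sub_nonneg.1 (hBC f hf)

lemma IsPositiveOperator.of_sub (hB : IsPositiveOperator B) (hBC : IsPositiveOperator (C - B)) :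
    IsPositiveOperator C :=
  fun f hf => (hB f hf).trans (hBC.apply_le_apply hf)

lemma IsPositiveOperator.monotone (hB : IsPositiveOperator B) : Monotone B :=
  (monotone_iff_map_nonneg B).2 hB

variable [IsOrderedModule ℝ E] [OrderClosedTopology E]

lemma duhamel_nonneg (hT : ∀ t, 0 ≤ t → IsPositiveOperator (T t)) (hv : ∀ s, 0 ≤ s → 0 ≤ v s)
    (ht : 0 ≤ t) : 0 ≤ duhamel T v t := by
  rw [duhamel, intervalIntegral.integral_of_le ht]
  refine integral_nonneg_of_ae ?_
  filter_upwards [ae_restrict_mem measurableSet_Ioc] with s hs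
  exact hT _ (posPart_nonneg _) _ (hv s hs.1.le)

lemma dysonPhillips_nonneg (hT : ∀ t, 0 ≤ t → IsPositiveOperator (T t))
    (hB : IsPositiveOperator B) (k : ℕ) (hf : 0 ≤ f) (ht : 0 ≤ t) :
    0 ≤ dysonPhillips T B k f t := by
  induction k generalizing t with
  | zero => exact hT _ (posPart_nonneg t) f hf
  | succ k ih => exact duhamel_nonneg hT (fun s hs => hB _ (ih hs)) ht

variable [CompleteSpace E]

lemma IsC0Semigroup.duhamel_le_duhamel (hT : IsC0Semigroup T)
    (hTpos : ∀ t, 0 ≤ t → IsPositiveOperator (T t)) (hv : Continuous v) (hw : Continuous w)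
    (hvw : ∀ s, 0 ≤ s → v s ≤ w s) (ht : 0 ≤ t) : duhamel T v t ≤ duhamel T w t := by
  rw [← sub_nonneg, ← hT.duhamel_sub hw hv]
  exact duhamel_nonneg hTpos (fun s hs => sub_nonneg.2 (hvw s hs)) ht

lemma IsC0Semigroup.dysonPhillips_le_dysonPhillips (hT : IsC0Semigroup T)
    (hTpos : ∀ t, 0 ≤ t → IsPositiveOperator (T t)) (hB : IsPositiveOperator B)
    (hBC : IsPositiveOperator (C - B)) (k : ℕ) (hf : 0 ≤ f) (ht : 0 ≤ t) :
    dysonPhillips T B k f t ≤ dysonPhillips T C k f t := by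
  induction k generalizing t with
  | zero => exact le_rfl
  | succ k ih =>
    refine hT.duhamel_le_duhamel hTpos (B.continuous.comp (hT.continuous_dysonPhillips B k f))
      (C.continuous.comp (hT.continuous_dysonPhillips C k f)) (fun s hs => ?_) ht
    exact (hB.monotone (ih hs)).trans
      (hBC.apply_le_apply (dysonPhillips_nonneg hTpos (hB.of_sub hBC) k hf hs))

lemma IsBoundedPerturbation.dysonPhillips_le (h : IsBoundedPerturbation T B S)
    (hT : IsC0Semigroup T) (hTpos : ∀ t, 0 ≤ t → IsPositiveOperator (T t))
    (hB : IsPositiveOperator B) (k : ℕ) (hf : 0 ≤ f) (ht : 0 ≤ t) :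
    dysonPhillips T B k f t ≤ S t f :=
  le_hasSum (h.hasSum_dysonPhillips hT f ht) k fun _ _ => dysonPhillips_nonneg hTpos hB _ hf ht

lemma IsBoundedPerturbation.isPositiveOperator_sub (h : IsBoundedPerturbation T B S)
    (hT : IsC0Semigroup T) (hTpos : ∀ t, 0 ≤ t → IsPositiveOperator (T t))
    (hB : IsPositiveOperator B) (ht : 0 ≤ t) : IsPositiveOperator (S t - T t) := fun f hf => by
  rw [sub_apply, sub_nonneg, ← dysonPhillips_zero (B := B) ht]
  exact h.dysonPhillips_le hT hTpos hB 0 hf ht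

-- Adding the series for `B` and `-B` cancels the odd terms and doubles the even ones.
lemma IsBoundedPerturbation.isPositiveOperator_sub_sub_sub (hU : IsBoundedPerturbation T B U)
    (hS : IsBoundedPerturbation T (-B) S) (hT : IsC0Semigroup T)
    (hTpos : ∀ t, 0 ≤ t → IsPositiveOperator (T t)) (hB : IsPositiveOperator B) (ht : 0 ≤ t) :
    IsPositiveOperator (U t - T t - (T t - S t)) := fun f hf => by
  have hsum := (hU.hasSum_dysonPhillips hT f ht).add (hS.hasSum_dysonPhillips hT f ht)
  have hterm (k : ℕ) : 0 ≤ dysonPhillips T B k f t + dysonPhillips T (-B) k f t := by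
    have hD := dysonPhillips_nonneg hTpos hB k hf ht
    rw [← neg_one_smul ℝ B, dysonPhillips_smul_operator]
    rcases neg_one_pow_eq_or ℝ k with h | h
    · rw [h, one_smul]; exact add_nonneg hD hD
    · rw [h, neg_one_smul, add_neg_cancel]
  have hle := le_hasSum hsum 0 fun k _ => hterm k
  rw [dysonPhillips_zero ht, dysonPhillips_zero ht] at hle
  simpa only [sub_apply, sub_nonneg, sub_le_sub_iff] using hle

-- Rescaling by `e^{ct}` reduces the claim to the positive perturbation `B + c`.
lemma IsBoundedPerturbation.isPositiveOperator (h : IsBoundedPerturbation T B S)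
    (hT : IsC0Semigroup T) (hTpos : ∀ t, 0 ≤ t → IsPositiveOperator (T t)) {c : ℝ}
    (hB : IsPositiveOperator (B + c • ContinuousLinearMap.id ℝ E)) (ht : 0 ≤ t) :
    IsPositiveOperator (S t) := fun f hf => by
  have hscaled := h.trans (h.1.isBoundedPerturbation_exp_smul c)
  have hpos : 0 ≤ Real.exp (c * t) • S t f :=
    (hTpos t ht).of_sub (hscaled.isPositiveOperator_sub hT hTpos hB ht) f hf
  simpa only [smul_smul, ← Real.exp_add, neg_add_cancel, Real.exp_zero, one_smul] using
    smul_nonneg (Real.exp_pos (-(c * t))).le hpos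

end Positivity

section StrongLimits

variable {E : Type*} [NormedAddCommGroup E] [NormedSpace ℝ E]

lemma IsSemigroup.isC0Semigroup_of_tendsto {S : ℝ → E →L[ℝ] E} (hS : IsSemigroup S)
    (hbound : ∀ a, ∃ M, ∀ t ∈ Set.Icc 0 a, ‖S t‖ ≤ M)
    (hzero : ∀ f, Tendsto (fun t => S t f) (𝓝[>] 0) (𝓝 f)) : IsC0Semigroup S := by
  refine ⟨hS, fun f t ht => ?_⟩
  obtain ⟨M, hM⟩ := hbound (t + 1)
  have hdiff {r s : ℝ} (hr : 0 ≤ r) (hrs : r ≤ s) (hrt : r ≤ t + 1) :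
      ‖S s f - S r f‖ ≤ M * ‖S (s - r) f - f‖ := by
    have hsplit : S s f = S r (S (s - r) f) := by
      rw [← hS.add_apply hr (sub_nonneg.2 hrs), add_sub_cancel]
    rw [hsplit, ← map_sub]
    exact (S r).le_of_opNorm_le (hM r ⟨hr, hrt⟩) _
  have hlim : Tendsto (fun s => M * ‖S s f - f‖) (𝓝[≥] 0) (𝓝 0) := by
    have hright : ContinuousWithinAt (fun s => S s f) (Set.Ioi 0) 0 := by
      rw [ContinuousWithinAt, hS.zero_apply]; exact hzero f
    simpa only [hS.zero_apply, sub_self, norm_zero, mul_zero] using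
      ((continuousWithinAt_Ioi_iff_Ici.1 hright).tendsto.sub_const f).norm.const_mul M
  have hdist : Tendsto (fun s => |s - t|) (𝓝[Set.Ici 0] t) (𝓝[≥] 0) := by
    refine tendsto_nhdsWithin_iff.2 ⟨?_, .of_forall fun s => abs_nonneg (s - t)⟩
    have hcont : Continuous fun s : ℝ => |s - t| := by fun_prop
    simpa only [sub_self, abs_zero] using (hcont.tendsto t).mono_left nhdsWithin_le_nhds
  refine tendsto_iff_norm_sub_tendsto_zero.2 <|
    squeeze_zero' (.of_forall fun _ => norm_nonneg _) ?_ (hlim.comp hdist)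
  filter_upwards [self_mem_nhdsWithin, nhdsWithin_le_nhds (Iio_mem_nhds (lt_add_one t))]
    with s hs hst
  rw [Function.comp_apply]
  rcases le_total s t with h | h
  · rw [abs_sub_comm, abs_of_nonneg (sub_nonneg.2 h), norm_sub_rev]
    exact hdiff hs h hst.le
  · rw [abs_of_nonneg (sub_nonneg.2 h)]
    exact hdiff ht h (lt_add_one t).le

variable [CompleteSpace E]

lemma tendsto_apply_of_tendsto {A : ℕ → E →L[ℝ] E} {R : E →L[ℝ] E} {u : ℕ → E} {f : E}
    (hA : ∀ f, Tendsto (fun n => A n f) atTop (𝓝 (R f))) (hu : Tendsto u atTop (𝓝 f)) :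
    Tendsto (fun n => A n (u n)) atTop (𝓝 (R f)) := by
  obtain ⟨M, hM⟩ := banach_steinhaus fun f =>
    (hA f).norm.bddAbove_range.imp fun _ hC n => hC (Set.mem_range_self n)
  have hdiff : Tendsto (fun n => A n (u n - f)) atTop (𝓝 0) :=
    squeeze_zero_norm (fun n => (A n).le_of_opNorm_le (hM n) _) <| by
      simpa only [sub_self, norm_zero, mul_zero] using (hu.sub_const f).norm.const_mul M
  simpa only [map_sub, sub_add_cancel, zero_add] using hdiff.add (hA f)

lemma IsSemigroup.of_tendsto {S : ℕ → ℝ → E →L[ℝ] E} {R : ℝ → E →L[ℝ] E}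
    (hS : ∀ n, IsSemigroup (S n))
    (hlim : ∀ t, 0 ≤ t → ∀ f, Tendsto (fun n => S n t f) atTop (𝓝 (R t f))) :
    IsSemigroup R := by
  refine ⟨ContinuousLinearMap.ext fun f => tendsto_nhds_unique (hlim 0 le_rfl f) ?_,
    fun s t hs ht => ContinuousLinearMap.ext fun f =>
      tendsto_nhds_unique (hlim (s + t) (add_nonneg hs ht) f) ?_⟩
  · simp only [(hS _).zero_apply, ContinuousLinearMap.id_apply, tendsto_const_nhds_iff]
  · simp only [(hS _).add_apply hs ht, ContinuousLinearMap.comp_apply]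
    exact tendsto_apply_of_tendsto (hlim s hs) (hlim t ht f)

end StrongLimits

section OrderContinuity

/-- Order continuity of the norm of a Banach lattice, in its sequential form: a decreasing
sequence of positive elements converges. -/
def OrderContinuousNorm (E : Type*) [NormedAddCommGroup E] [Lattice E] : Prop :=
  ∀ u : ℕ → E, Antitone u → (∀ n, 0 ≤ u n) → ∃ f, Tendsto u atTop (𝓝 f)

variable {E : Type*} [NormedAddCommGroup E] [NormedSpace ℝ E] [CompleteSpace E] [Lattice E]
  [IsOrderedAddMonoid E]

lemma OrderContinuousNorm.exists_tendsto (hE : OrderContinuousNorm E) {A : ℕ → E →L[ℝ] E}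
    (hA : ∀ n, IsPositiveOperator (A n)) (hanti : ∀ n, IsPositiveOperator (A n - A (n + 1))) :
    ∃ R : E →L[ℝ] E, ∀ f, Tendsto (fun n => A n f) atTop (𝓝 (R f)) := by
  have hpos (f : E) (hf : 0 ≤ f) : ∃ g, Tendsto (fun n => A n f) atTop (𝓝 g) :=
    hE _ (antitone_nat_of_succ_le fun n => (hanti n).apply_le_apply hf) fun n => hA n f hf
  have hconv (f : E) : ∃ g, Tendsto (fun n => A n f) atTop (𝓝 g) := by
    obtain ⟨g, hg⟩ := hpos f⁺ (posPart_nonneg f)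
    obtain ⟨h, hh⟩ := hpos f⁻ (negPart_nonneg f)
    exact ⟨g - h, by simpa only [← map_sub, posPart_sub_negPart] using hg.sub hh⟩
  choose R hR using hconv
  exact ⟨continuousLinearMapOfTendsto A (tendsto_pi_nhds.2 hR), hR⟩

end OrderContinuity

section BanachLattice

variable {E : Type*} [NormedAddCommGroup E] [Lattice E] [HasSolidNorm E] [IsOrderedAddMonoid E]

lemma norm_le_norm_of_nonneg_of_le {f g : E} (hf : 0 ≤ f) (hfg : f ≤ g) : ‖f‖ ≤ ‖g‖ :=
  norm_le_norm_of_abs_le_abs (by rwa [abs_of_nonneg hf, abs_of_nonneg (hf.trans hfg)])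

variable [NormedSpace ℝ E] {A C : E →L[ℝ] E} {f : E}

lemma eq_zero_of_forall_natCast_smul_le {u : ℕ → E} {M : ℝ} (hf : 0 ≤ f)
    (hle : ∀ n : ℕ, (n : ℝ) • f ≤ u n) (hu : ∀ n, ‖u n‖ ≤ M) : f = 0 := by
  have hbound (n : ℕ) : n • ‖f‖ ≤ M := by
    have hnonneg : 0 ≤ (n : ℝ) • f := by rw [Nat.cast_smul_eq_nsmul]; exact nsmul_nonneg hf n
    calc n • ‖f‖ = ‖(n : ℝ) • f‖ := by rw [norm_smul, Real.norm_natCast, nsmul_eq_mul]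
      _ ≤ M := (norm_le_norm_of_nonneg_of_le hnonneg (hle n)).trans (hu n)
  by_contra hne
  obtain ⟨n, hn⟩ := exists_lt_nsmul (norm_pos_iff.2 hne) M
  exact (hbound n).not_gt hn

lemma IsPositiveOperator.norm_le_norm (hA : IsPositiveOperator A)
    (hAC : IsPositiveOperator (C - A)) : ‖A‖ ≤ ‖C‖ := by
  refine A.opNorm_le_bound (norm_nonneg C) fun f => ?_
  have habs : |A f| ≤ A |f| :=
    abs_le'.2 ⟨hA.monotone (le_abs_self f), map_neg A f ▸ hA.monotone (neg_le_abs f)⟩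
  calc ‖A f‖ ≤ ‖C |f|‖ := norm_le_norm_of_abs_le_abs <|
        (habs.trans (hAC.apply_le_apply (abs_nonneg f))).trans (le_abs_self _)
    _ ≤ ‖C‖ * ‖f‖ := C.le_opNorm_of_le (norm_abs_eq_norm f).le

variable [CompleteSpace E] {T : ℝ → E →L[ℝ] E}

lemma IsSemigroup.isC0Semigroup_of_squeeze {S U : ℝ → E →L[ℝ] E} (hS : IsSemigroup S)
    (hT : IsC0Semigroup T) (hU : IsC0Semigroup U) (hSpos : ∀ t, 0 ≤ t → IsPositiveOperator (S t))
    (hST : ∀ t, 0 ≤ t → IsPositiveOperator (T t - S t))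
    (hTU : ∀ t, 0 ≤ t → IsPositiveOperator (U t - T t - (T t - S t))) : IsC0Semigroup S := by
  refine hS.isC0Semigroup_of_tendsto (fun a => ?_) fun f => ?_
  · obtain ⟨M, hM⟩ := hT.exists_norm_posPart_le a
    exact ⟨M, fun t ht => ((hSpos t ht.1).norm_le_norm (hST t ht.1)).trans
      (posPart_of_nonneg ht.1 ▸ hM t ht.2)⟩
  have hpos (f : E) (hf : 0 ≤ f) : Tendsto (fun t => S t f) (𝓝[>] 0) (𝓝 f) := by
    have hTS : Tendsto (fun t => T t f - S t f) (𝓝[>] 0) (𝓝 0) := by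
      refine squeeze_zero_norm' ?_ (tendsto_zero_iff_norm_tendsto_zero.1 <|
        sub_self f ▸ (hU.tendsto_apply_zero f).sub (hT.tendsto_apply_zero f))
      filter_upwards [self_mem_nhdsWithin] with t ht
      exact norm_le_norm_of_nonneg_of_le (hST t (Set.mem_Ioi.1 ht).le f hf)
        ((hTU t (Set.mem_Ioi.1 ht).le).apply_le_apply hf)
    simpa only [sub_sub_self, sub_zero] using (hT.tendsto_apply_zero f).sub hTS
  simpa only [← map_sub, posPart_sub_negPart] using
    (hpos f⁺ (posPart_nonneg f)).sub (hpos f⁻ (negPart_nonneg f))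

variable [IsOrderedModule ℝ E] {B : ℕ → E →L[ℝ] E} {U S : ℕ → ℝ → E →L[ℝ] E}
  {UV : ℝ → E →L[ℝ] E}

theorem OrderContinuousNorm.exists_isC0Semigroup_tendsto (hE : OrderContinuousNorm E)
    (hT : IsC0Semigroup T) (hTpos : ∀ t, 0 ≤ t → IsPositiveOperator (T t))
    (hB : ∀ n, IsPositiveOperator (B n))
    (hBbdd : ∀ n, ∃ c : ℝ, IsPositiveOperator (-(B n) + c • ContinuousLinearMap.id ℝ E))
    (hBmono : ∀ n, IsPositiveOperator (B (n + 1) - B n))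
    (hU : ∀ n, IsBoundedPerturbation T (B n) (U n))
    (hUV : ∀ t, 0 ≤ t → ∀ f, Tendsto (fun n => U n t f) atTop (𝓝 (UV t f)))
    (hUV0 : IsC0Semigroup UV) (hS : ∀ n, IsBoundedPerturbation T (-(B n)) (S n)) :
    ∃ SV : ℝ → E →L[ℝ] E, IsC0Semigroup SV ∧
      ∀ t, 0 ≤ t → ∀ f, Tendsto (fun n => S n t f) atTop (𝓝 (SV t f)) := by
  have hSpos (n : ℕ) (t : ℝ) (ht : 0 ≤ t) : IsPositiveOperator (S n t) :=
    let ⟨_, hc⟩ := hBbdd n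
    (hS n).isPositiveOperator hT hTpos hc ht
  have hanti (n : ℕ) (t : ℝ) (ht : 0 ≤ t) : IsPositiveOperator (S n t - S (n + 1) t) :=
    (((hS (n + 1)).symm hT).trans (hS n)).isPositiveOperator_sub (hS (n + 1)).1 (hSpos (n + 1))
      (by rw [neg_neg, ← sub_eq_add_neg]; exact hBmono n) ht
  have hST (n : ℕ) (t : ℝ) (ht : 0 ≤ t) : IsPositiveOperator (T t - S n t) :=
    ((hS n).symm hT).isPositiveOperator_sub (hS n).1 (hSpos n)
      (by rw [neg_neg]; exact hB n) ht
  choose! SV hSV using fun t (ht : 0 ≤ t) =>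
    hE.exists_tendsto (fun n => hSpos n t ht) fun n => hanti n t ht
  have hTS (t : ℝ) (ht : 0 ≤ t) (f : E) :
      Tendsto (fun n => T t f - S n t f) atTop (𝓝 (T t f - SV t f)) :=
    (hSV t ht f).const_sub (T t f)
  exact ⟨SV, (IsSemigroup.of_tendsto (fun n => (hS n).1.1) hSV).isC0Semigroup_of_squeeze hT hUV0
    (fun t ht => isPositiveOperator_of_tendsto (fun n => hSpos n t ht) (hSV t ht))
    (fun t ht => isPositiveOperator_of_tendsto (fun n => hST n t ht) (hTS t ht))
    (fun t ht => isPositiveOperator_of_tendsto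
      (fun n => (hU n).isPositiveOperator_sub_sub_sub (hS n) hT hTpos (hB n) ht)
      fun f => ((hUV t ht f).sub_const (T t f)).sub (hTS t ht f)), hSV⟩

theorem eq_zero_of_forall_natCast_smul_le_perturbation {Q : E →L[ℝ] E} (hT : IsC0Semigroup T)
    (hTpos : ∀ t, 0 ≤ t → IsPositiveOperator (T t)) (hQ : IsPositiveOperator Q)
    (hQB : ∀ n : ℕ, IsPositiveOperator (B n - (n : ℝ) • Q))
    (hU : ∀ n, IsBoundedPerturbation T (B n) (U n))
    (hUV : ∀ t, 0 ≤ t → ∀ f, Tendsto (fun n => U n t f) atTop (𝓝 (UV t f))) : Q = 0 := by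
  have hnQ (n : ℕ) : IsPositiveOperator ((n : ℝ) • Q) :=
    fun f hf => smul_nonneg n.cast_nonneg (hQ f hf)
  have hterm {f : E} (hf : 0 ≤ f) {t : ℝ} (ht : 0 ≤ t) : dysonPhillips T Q 1 f t = 0 := by
    obtain ⟨M, hM⟩ := (hUV t ht f).norm.bddAbove_range
    refine eq_zero_of_forall_natCast_smul_le (dysonPhillips_nonneg hTpos hQ 1 hf ht)
      (fun n => ?_) fun n => hM (Set.mem_range_self n)
    calc (n : ℝ) • dysonPhillips T Q 1 f t = dysonPhillips T ((n : ℝ) • Q) 1 f t := by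
          rw [dysonPhillips_smul_operator, pow_one]
      _ ≤ dysonPhillips T (B n) 1 f t :=
          hT.dysonPhillips_le_dysonPhillips hTpos (hnQ n) (hQB n) 1 hf ht
      _ ≤ U n t f := (hU n).dysonPhillips_le hT hTpos ((hnQ n).of_sub (hQB n)) 1 hf ht
  have hpos {f : E} (hf : 0 ≤ f) : Q f = 0 := by
    have hderiv := hT.tendsto_inv_smul_duhamel
      (Q.continuous.comp (hT.continuous_dysonPhillips Q 0 f))
    rw [Function.comp_apply, dysonPhillips_zero le_rfl, hT.1.zero_apply] at hderiv
    refine tendsto_nhds_unique hderiv (tendsto_const_nhds.congr' ?_)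
    filter_upwards [self_mem_nhdsWithin] with t ht
    exact ((smul_eq_zero_of_right _ (hterm hf (Set.mem_Ioi.1 ht).le))).symm
  ext f
  rw [← posPart_sub_negPart f, map_sub, hpos (posPart_nonneg f), hpos (negPart_nonneg f),
    sub_zero, zero_apply]

end BanachLattice

section LocallyMeasurable

variable {Ω α β : Type*} [MeasurableSpace Ω] [MeasurableSpace α] [MeasurableSpace β]
  {μ : Measure Ω}

lemma LocallyMeasurable.comp {V : Ω → α} (hV : LocallyMeasurable μ V) {φ : α → β}
    (hφ : Measurable φ) : LocallyMeasurable μ (φ ∘ V) := fun C hC hμC => by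
  obtain ⟨g, hg, hVg⟩ := hV C hC hμC
  exact ⟨φ ∘ g, hφ.comp hg, hVg.mono fun _ h => congrArg φ h⟩

lemma LocallyMeasurable.aemeasurable_restrict {V : Ω → α} (hV : LocallyMeasurable μ V)
    {A : Set Ω} (hA : MeasurableSet A) [SigmaFinite (μ.restrict A)] :
    AEMeasurable V (μ.restrict A) := by
  rw [← Measure.restrict_univ (μ := μ.restrict A), ← iUnion_spanningSets (μ.restrict A),
    aemeasurable_iUnion_iff]
  intro n
  have hn := measurableSet_spanningSets (μ.restrict A) n
  have hfin := measure_spanningSets_lt_top (μ.restrict A) n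
  rw [Measure.restrict_apply hn] at hfin
  rw [Measure.restrict_restrict hn]
  exact hV _ (hn.inter hA) hfin

-- `μ` need not be σ-finite, but its restriction to the support of an `L_p` function is.
lemma LocallyMeasurable.aestronglyMeasurable_mul {p : ℝ≥0∞} {w : Ω → ℝ}
    (hw : LocallyMeasurable μ w) (hp0 : p ≠ 0) (hp : p ≠ ∞) (f : Lp ℝ p μ) :
    AEStronglyMeasurable (w * ⇑f) μ := by
  obtain ⟨A, hA, hfA, hfin⟩ := (Lp.finStronglyMeasurable f hp0 hp).exists_set_sigmaFinite
  have hsupp : w * ⇑f = A.indicator (w * ⇑f) := by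
    refine (Set.indicator_eq_self.2 <| Function.support_subset_iff'.2 fun ω hω => ?_).symm
    rw [Pi.mul_apply, hfA ω hω, mul_zero]
  rw [hsupp]
  exact (aestronglyMeasurable_indicator_iff hA).2 <|
    (hw.aemeasurable_restrict hA).aestronglyMeasurable.mul (Lp.aestronglyMeasurable f).restrict

end LocallyMeasurable

section MulOperator

variable {Ω : Type*} [MeasurableSpace Ω] {μ : Measure Ω} {p : ℝ≥0∞} [Fact (1 ≤ p)]
  {v w : Ω → ℝ} {A B : Lp ℝ p μ →L[ℝ] Lp ℝ p μ}

/-- The bounded operator `B` on `L_p(μ)` is multiplication by the function `w`. -/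
def IsMulOperator (w : Ω → ℝ) (B : Lp ℝ p μ →L[ℝ] Lp ℝ p μ) : Prop :=
  ∀ f : Lp ℝ p μ, B f =ᵐ[μ] w * ⇑f

lemma exists_isMulOperator (hp : p ≠ ∞) (hw : LocallyMeasurable μ w) {c : ℝ}
    (hc : ∀ ω, |w ω| ≤ c) : ∃ B : Lp ℝ p μ →L[ℝ] Lp ℝ p μ, IsMulOperator w B := by
  have hp0 : p ≠ 0 := (zero_lt_one.trans_le Fact.out).ne'
  have hbound (f : Lp ℝ p μ) (ω : Ω) : ‖(w * ⇑f) ω‖ ≤ c * ‖f ω‖ := by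
    rw [Pi.mul_apply, norm_mul]
    exact mul_le_mul_of_nonneg_right (hc ω) (norm_nonneg _)
  have hmem (f : Lp ℝ p μ) : MemLp (w * ⇑f) p μ :=
    (Lp.memLp f).of_le_mul (hw.aestronglyMeasurable_mul hp0 hp f) (.of_forall (hbound f))
  let L : Lp ℝ p μ →ₗ[ℝ] Lp ℝ p μ :=
    { toFun := fun f => (hmem f).toLp _
      map_add' := fun f g => by
        rw [← MemLp.toLp_add (hmem f) (hmem g)]
        refine MemLp.toLp_congr _ _ ?_
        filter_upwards [Lp.coeFn_add f g] with ω h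
        simp only [Pi.mul_apply, Pi.add_apply, h, mul_add]
      map_smul' := fun a f => by
        rw [RingHom.id_apply, ← MemLp.toLp_const_smul a (hmem f)]
        refine MemLp.toLp_congr _ _ ?_
        filter_upwards [Lp.coeFn_smul a f] with ω h
        simp only [Pi.mul_apply, Pi.smul_apply, h, smul_eq_mul, mul_left_comm] }
  refine ⟨L.mkContinuous c fun f => Lp.norm_le_mul_norm_of_ae_le_mul ?_,
    fun f => (hmem f).coeFn_toLp⟩
  filter_upwards [(hmem f).coeFn_toLp] with ω h
  exact (congrArg norm h).trans_le (hbound f ω)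

lemma IsMulOperator.neg (hB : IsMulOperator w B) : IsMulOperator (-w) (-B) := fun f => by
  filter_upwards [hB f, Lp.coeFn_neg (B f)] with ω h hneg
  simp only [neg_apply, hneg, Pi.neg_apply, h, Pi.mul_apply, neg_mul]

lemma IsMulOperator.add (hA : IsMulOperator v A) (hB : IsMulOperator w B) :
    IsMulOperator (v + w) (A + B) := fun f => by
  filter_upwards [hA f, hB f, Lp.coeFn_add (A f) (B f)] with ω hv hw hadd
  simp only [add_apply, hadd, Pi.add_apply, hv, hw, Pi.mul_apply, add_mul]

lemma IsMulOperator.sub (hA : IsMulOperator v A) (hB : IsMulOperator w B) :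
    IsMulOperator (v - w) (A - B) := by
  simpa only [sub_eq_add_neg] using hA.add hB.neg

lemma IsMulOperator.const_smul (hB : IsMulOperator w B) (c : ℝ) :
    IsMulOperator (c • w) (c • B) := fun f => by
  filter_upwards [hB f, Lp.coeFn_smul c (B f)] with ω h hsmul
  simp only [smul_apply, hsmul, Pi.smul_apply, h, Pi.mul_apply, smul_mul_assoc]

lemma isMulOperator_one : IsMulOperator 1 (ContinuousLinearMap.id ℝ (Lp ℝ p μ)) :=
  fun f => by rw [one_mul, ContinuousLinearMap.id_apply]

lemma IsMulOperator.isPositiveOperator (hB : IsMulOperator w B) (hw : 0 ≤ w) :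
    IsPositiveOperator B := fun f hf => by
  rw [← Lp.coeFn_nonneg] at hf ⊢
  filter_upwards [hf, hB f] with ω hfω h
  exact h ▸ mul_nonneg (hw ω) hfω

lemma IsMulOperator.isLocalNullSet {N : Set Ω}
    (hN : IsMulOperator (N.indicator 1) (0 : Lp ℝ p μ →L[ℝ] Lp ℝ p μ)) :
    IsLocalNullSet μ N := fun C hC hμC => by
  refine measure_eq_zero_iff_ae_notMem.2 ?_
  filter_upwards [hN (indicatorConstLp p hC hμC.ne 1), Lp.coeFn_zero ℝ p μ,
    indicatorConstLp_coeFn (p := p) (hs := hC) (hμs := hμC.ne) (c := (1 : ℝ))]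
    with ω hmul hzero hind ⟨hωN, hωC⟩
  rw [zero_apply, hzero, Pi.mul_apply, hind, Set.indicator_of_mem hωN,
    Set.indicator_of_mem hωC] at hmul
  exact zero_ne_one (hmul.trans (mul_one _))

lemma isPerturbedSG_iff {T S : ℝ → Lp ℝ p μ →L[ℝ] Lp ℝ p μ} (hB : IsMulOperator (-w) B) :
    IsPerturbedSG μ p T S w ↔ IsBoundedPerturbation T B S := by
  refine and_congr_right fun _ => forall₂_congr fun f g => ?_
  have hsub (g₀ : Lp ℝ p μ) : g =ᵐ[μ] (fun ω => g₀ ω - w ω * f ω) ↔ g₀ = g - B f := by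
    have hadd : g₀ + B f =ᵐ[μ] fun ω => g₀ ω - w ω * f ω := by
      filter_upwards [hB f, Lp.coeFn_add g₀ (B f)] with ω h hadd
      rw [hadd, Pi.add_apply, h, Pi.mul_apply, Pi.neg_apply, neg_mul, sub_eq_add_neg]
    rw [eq_sub_iff_add_eq, eq_comm, Lp.ext_iff]
    exact ⟨fun h => h.trans hadd.symm, fun h => h.trans hadd⟩
  simp only [hsub, exists_eq_right]

end MulOperator

section LpLattice

variable {Ω : Type*} [MeasurableSpace Ω] {μ : Measure Ω} {p : ℝ≥0∞}

instance : IsOrderedModule ℝ (Lp ℝ p μ) :=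
  IsOrderedModule.of_smul_nonneg fun c hc f hf => by
    rw [← Lp.coeFn_nonneg] at hf ⊢
    filter_upwards [hf, Lp.coeFn_smul c f] with ω hω hsmul
    exact hsmul ▸ smul_nonneg hc hω

variable [Fact (1 ≤ p)]

lemma norm_sub_rpow_add_norm_rpow_le (hp : p ≠ ∞) {f g : Lp ℝ p μ} (hg : 0 ≤ g) (hgf : g ≤ f) :
    ‖f - g‖ ^ p.toReal + ‖g‖ ^ p.toReal ≤ ‖f‖ ^ p.toReal := by
  have hp0 : p ≠ 0 := (zero_lt_one.trans_le Fact.out).ne'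
  have hp1 : 1 ≤ p.toReal := (ENNReal.dichotomy p).resolve_left hp
  have hnorm (h : Lp ℝ p μ) : ENNReal.ofReal (‖h‖ ^ p.toReal) = ∫⁻ ω, ‖h ω‖ₑ ^ p.toReal ∂μ := by
    rw [← ENNReal.ofReal_rpow_of_nonneg (norm_nonneg h) (by positivity), ofReal_norm,
      Lp.enorm_def, eLpNorm_eq_lintegral_rpow_enorm_toReal hp0 hp, ← ENNReal.rpow_mul,
      one_div_mul_cancel (by positivity), ENNReal.rpow_one]
  rw [← ENNReal.ofReal_le_ofReal_iff (by positivity),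
    ENNReal.ofReal_add (by positivity) (by positivity), hnorm, hnorm, hnorm,
    ← lintegral_add_left' ((Lp.aestronglyMeasurable _).enorm.pow_const _)]
  refine lintegral_mono_ae ?_
  filter_upwards [(Lp.coeFn_nonneg g).2 hg, (Lp.coeFn_le g f).2 hgf, Lp.coeFn_sub f g]
    with ω hgω hgfω hsub
  have henorm : ‖f ω‖ₑ = ‖(f - g) ω‖ₑ + ‖g ω‖ₑ := by
    rw [hsub, Pi.sub_apply, Real.enorm_of_nonneg (sub_nonneg.2 hgfω), Real.enorm_of_nonneg hgω,
      Real.enorm_of_nonneg (le_trans hgω hgfω),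
      ← ENNReal.ofReal_add (sub_nonneg.2 hgfω) hgω, sub_add_cancel]
  rw [henorm]
  exact ENNReal.add_rpow_le_rpow_add _ _ hp1

lemma orderContinuousNorm_Lp (hp : p ≠ ∞) : OrderContinuousNorm (Lp ℝ p μ) := by
  intro u hu hpos
  have hp1 : 0 < p.toReal := ENNReal.toReal_pos (zero_lt_one.trans_le Fact.out).ne' hp
  have hsup {m n : ℕ} (hmn : m ≤ n) := norm_sub_rpow_add_norm_rpow_le hp (hpos n) (hu hmn)
  have hanti : Antitone fun n => ‖u n‖ ^ p.toReal := fun m n hmn =>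
    (le_add_of_nonneg_left (by positivity)).trans (hsup hmn)
  have hcauchy : CauchySeq fun n => ‖u n‖ ^ p.toReal :=
    (tendsto_atTop_ciInf hanti ⟨0, Set.forall_mem_range.2 fun n => by positivity⟩).cauchySeq
  refine cauchySeq_tendsto_of_complete (Metric.cauchySeq_iff'.2 fun ε hε => ?_)
  obtain ⟨N, hN⟩ := Metric.cauchySeq_iff'.1 hcauchy (ε ^ p.toReal) (by positivity)
  refine ⟨N, fun n hn => ?_⟩
  rw [dist_comm, dist_eq_norm, ← Real.rpow_lt_rpow_iff (norm_nonneg _) hε.le hp1]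
  have hlt := (abs_lt.1 (hN n hn)).1
  linarith [hsup hn]

end LpLattice

section Truncation

variable {Ω : Type*} {W : Ω → EReal}

lemma neg_natCast_le_natCast (n : ℕ) : -(n : EReal) ≤ n :=
  (EReal.neg_le_zero.2 n.cast_nonneg').trans n.cast_nonneg'

lemma truncE_neg (V : Ω → EReal) (n : ℕ) : truncE (-V) n = -truncE V n := by
  ext ω
  rw [Pi.neg_apply, truncE, truncE, ← EReal.toReal_neg_eq, ← EReal.min_neg_neg,
    ← EReal.max_neg_neg, neg_neg, max_min_distrib_right, max_eq_left (neg_natCast_le_natCast n),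
    Pi.neg_apply]

lemma abs_truncE_le (V : Ω → EReal) (n : ℕ) (ω : Ω) : |truncE V n ω| ≤ n := by
  have hle : max (min (V ω) n) (-n) ≤ n := max_le (min_le_right _ _) (neg_natCast_le_natCast n)
  have hge : -n ≤ max (min (V ω) n) (-n) := le_max_right _ _
  have htop : max (min (V ω) n) (-n) ≠ ⊤ := ne_top_of_le_ne_top (EReal.natCast_ne_top n) hle
  have hbot : max (min (V ω) n) (-n) ≠ ⊥ :=
    ne_bot_of_le_ne_bot (EReal.neg_eq_bot_iff.not.2 (EReal.natCast_ne_top n)) hge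
  lift max (min (V ω) n) (-n) to ℝ using ⟨htop, hbot⟩ with x hx
  rw [truncE, ← hx, EReal.toReal_coe]
  exact abs_le.2 ⟨EReal.coe_le_coe_iff.1 hge, EReal.coe_le_coe_iff.1 hle⟩

lemma truncE_of_nonneg (hW : 0 ≤ W) (n : ℕ) (ω : Ω) :
    truncE W n ω = (min (W ω) n).toReal := by
  rw [truncE, max_eq_left]
  exact (EReal.neg_le_zero.2 n.cast_nonneg').trans (le_min (hW ω) n.cast_nonneg')

lemma truncE_nonneg (hW : 0 ≤ W) (n : ℕ) : 0 ≤ truncE W n := fun ω => by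
  rw [truncE_of_nonneg hW]
  exact EReal.toReal_nonneg (le_min (hW ω) n.cast_nonneg')

lemma monotone_truncE (hW : 0 ≤ W) : Monotone (truncE W) := fun m n hmn ω => by
  rw [truncE_of_nonneg hW, truncE_of_nonneg hW]
  refine EReal.toReal_le_toReal (min_le_min_left _ (mod_cast hmn)) ?_ ?_
  · exact ne_bot_of_le_ne_bot EReal.zero_ne_bot (le_min (hW ω) m.cast_nonneg')
  · exact ne_top_of_le_ne_top (EReal.natCast_ne_top n) (min_le_right _ _)

lemma truncE_of_eq_top {ω : Ω} (hω : W ω = ⊤) (n : ℕ) : truncE W n ω = n := by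
  rw [truncE, hω, min_eq_right le_top, max_eq_left (neg_natCast_le_natCast n),
    ← EReal.coe_natCast, EReal.toReal_coe]

lemma LocallyMeasurable.truncE [MeasurableSpace Ω] {μ : Measure Ω} {V : Ω → EReal}
    (hV : LocallyMeasurable μ V) (n : ℕ) : LocallyMeasurable μ (truncE V n) :=
  hV.comp (φ := fun x : EReal => (max (min x n) (-n)).toReal) <|
    ((measurable_id.min measurable_const).max measurable_const).ereal_toReal

end Truncation

section Admissible

variable {Ω : Type*} [MeasurableSpace Ω] {μ : Measure Ω} {p : ℝ≥0∞} [Fact (1 ≤ p)]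
  {T : ℝ → Lp ℝ p μ →L[ℝ] Lp ℝ p μ} {V : Ω → EReal}

theorem AdmissibleE.neg_of_nonpos (hp : p ≠ ∞) (hT : IsC0Semigroup T) (hTpos : IsPositiveSG T)
    (hVneg : V ≤ 0) (hV : AdmissibleE μ p T V) : AdmissibleE μ p T (-V) := by
  obtain ⟨hVmeas, UV, ⟨U, hU, hUV⟩, hUV0⟩ := hV
  have hW : 0 ≤ -V := fun ω => EReal.neg_nonneg.2 (hVneg ω)
  have hWmeas : LocallyMeasurable μ (-V) := hVmeas.comp measurable_neg
  choose B hB using fun n => exists_isMulOperator (p := p) hp (hWmeas.truncE n) (abs_truncE_le _ n)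
  have hS (n : ℕ) := isBoundedPerturbation_perturbedSemigroup hT (-(B n))
  obtain ⟨SV, hSV0, hSV⟩ := (orderContinuousNorm_Lp hp).exists_isC0Semigroup_tendsto hT hTpos
    (fun n => (hB n).isPositiveOperator (truncE_nonneg hW n))
    (fun n => ⟨n, ((hB n).neg.add (isMulOperator_one.const_smul n)).isPositiveOperator fun ω => by
      simpa using (abs_le.1 (abs_truncE_le (-V) n ω)).2⟩)
    (fun n => ((hB (n + 1)).sub (hB n)).isPositiveOperator <|
      sub_nonneg.2 (monotone_truncE hW n.le_succ))
    (fun n => (isPerturbedSG_iff (truncE_neg V n ▸ hB n)).1 (hU n)) hUV hUV0 hS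
  exact ⟨hWmeas, SV, ⟨_, fun n => (isPerturbedSG_iff (hB n).neg).2 (hS n), hSV⟩, hSV0⟩

theorem AdmissibleE.isLocalNullSet_eq_bot (hp : p ≠ ∞) (hT : IsC0Semigroup T)
    (hTpos : IsPositiveSG T) (hVneg : V ≤ 0) (hV : AdmissibleE μ p T V) :
    IsLocalNullSet μ {ω | V ω = ⊥} := by
  obtain ⟨hVmeas, UV, ⟨U, hU, hUV⟩, -⟩ := hV
  have hW : 0 ≤ -V := fun ω => EReal.neg_nonneg.2 (hVneg ω)
  have hWmeas : LocallyMeasurable μ (-V) := hVmeas.comp measurable_neg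
  choose B hB using fun n => exists_isMulOperator (p := p) hp (hWmeas.truncE n) (abs_truncE_le _ n)
  set N := {ω | V ω = ⊥}
  have hN : LocallyMeasurable μ (N.indicator 1 : Ω → ℝ) :=
    hVmeas.comp (measurable_one.indicator (measurableSet_singleton ⊥))
  have hN1 (ω : Ω) : |(N.indicator 1 : Ω → ℝ) ω| ≤ 1 := by
    simpa using norm_indicator_le_norm_self (1 : Ω → ℝ) ω
  obtain ⟨Q, hQ⟩ := exists_isMulOperator (p := p) hp hN hN1
  have hQ0 : Q = 0 := by
    refine eq_zero_of_forall_natCast_smul_le_perturbation hT hTpos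
      (hQ.isPositiveOperator <| Set.indicator_nonneg fun _ _ => zero_le_one)
      (fun n => ((hB n).sub (hQ.const_smul n)).isPositiveOperator fun ω => ?_)
      (fun n => (isPerturbedSG_iff (truncE_neg V n ▸ hB n)).1 (hU n)) hUV
    by_cases hω : ω ∈ N
    · simp [hω, truncE_of_eq_top (W := -V) (EReal.neg_eq_top_iff.2 hω)]
    · simpa [hω] using truncE_nonneg hW n ω
  exact (hQ0 ▸ hQ).isLocalNullSet

end Admissible

end Absorption

/-- If `V : Ω → [−∞,0]` is a `T`-admissible absorption rate, then `−V` is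
`T`-admissible, and `[V = −∞]` is a local `μ`-null set. -/
theorem statement9
    {Ω : Type*} [MeasurableSpace Ω] (μ : Measure Ω) (p : ℝ≥0∞) [Fact (1 ≤ p)] (hp : p ≠ ∞)
    (T : ℝ → Lp ℝ p μ →L[ℝ] Lp ℝ p μ)
    (hT : IsC0Semigroup T) (hTpos : IsPositiveSG T)
    (V : Ω → EReal) (hVneg : ∀ ω, V ω ≤ 0)
    (hV : AdmissibleE μ p T V) :
    AdmissibleE μ p T (fun ω => -(V ω)) ∧
    IsLocalNullSet μ {ω | V ω = ⊥} := by
  exact ⟨hV.neg_of_nonpos hp hT hTpos hVneg, hV.isLocalNullSet_eq_bot hp hT hTpos hVneg⟩
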